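/- Let X ∈ ℝ^{n×p}, y ∈ ℝⁿ, f(g,l) = (2n)⁻¹‖X(g∘l) − y‖², and consider the gradient descent iterates g_{t+1} = g_t − η l_t ∘ [n⁻¹Xᵀ(X(g_t∘l_t) − y)], l_{t+1} = l_t − η g_t ∘ [n⁻¹Xᵀ(X(g_t∘l_t) − y)] initialized with all 2p coordinates of (g₀, l₀) drawn i.i.d. from the uniform distribution on (−α, α). Then there exists η₀ > 0 such that for every step size 0 < η < η₀, with probability one over the random initialization, the iterates (g_t, l_t) converge to a global minimum of f. -/

import Mathlib

open MeasureTheory ProbabilityTheory Matrix Filter Topology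

noncomputable section

/-- Hadamard (entrywise) product of two vectors. -/
def had {p : ℕ} (u v : Fin p → ℝ) : Fin p → ℝ := fun j => u j * v j

/-- Euclidean norm of a vector. -/
def nrm2 {p : ℕ} (v : Fin p → ℝ) : ℝ := Real.sqrt (∑ j, (v j) ^ 2)

/-- ℓ1 norm of a vector. -/
def nrm1 {p : ℕ} (v : Fin p → ℝ) : ℝ := ∑ j, |v j|

/-- Sup norm of a vector. -/
def nrmInf {p : ℕ} (v : Fin p → ℝ) : ℝ := ⨆ j, |v j|

/-- A vector is `s`-sparse if it has at most `s` nonzero entries. -/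
def Sparse {p : ℕ} (s : ℕ) (v : Fin p → ℝ) : Prop := {j | v j ≠ 0}.ncard ≤ s

/-- The `(s, δ)`-Restricted Isometry Property:
`(1−δ)‖u‖² ≤ n⁻¹‖Xu‖² ≤ (1+δ)‖u‖²` for all `s`-sparse `u`. -/
def RIP {n p : ℕ} (X : Matrix (Fin n) (Fin p) ℝ) (s : ℕ) (δ : ℝ) : Prop :=
  ∀ u : Fin p → ℝ, Sparse s u →
    (1 - δ) * nrm2 u ^ 2 ≤ (n : ℝ)⁻¹ * nrm2 (X.mulVec u) ^ 2 ∧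
      (n : ℝ)⁻¹ * nrm2 (X.mulVec u) ^ 2 ≤ (1 + δ) * nrm2 u ^ 2

/-- The over-parametrized quadratic loss `f(g,l) = (2n)⁻¹‖X(g∘l) − y‖²`. -/
def lossFun {n p : ℕ} (X : Matrix (Fin n) (Fin p) ℝ) (y : Fin n → ℝ)
    (gl : (Fin p → ℝ) × (Fin p → ℝ)) : ℝ :=
  (2 * (n : ℝ))⁻¹ * nrm2 (X.mulVec (had gl.1 gl.2) - y) ^ 2

/-- One step of gradient descent on `f(g,l)`. -/
def gdStep {n p : ℕ} (X : Matrix (Fin n) (Fin p) ℝ) (y : Fin n → ℝ) (η : ℝ)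
    (gl : (Fin p → ℝ) × (Fin p → ℝ)) : (Fin p → ℝ) × (Fin p → ℝ) :=
  (gl.1 - η • had gl.2 ((n : ℝ)⁻¹ • Xᵀ.mulVec (X.mulVec (had gl.1 gl.2) - y)),
    gl.2 - η • had gl.1 ((n : ℝ)⁻¹ • Xᵀ.mulVec (X.mulVec (had gl.1 gl.2) - y)))

/-- The uniform distribution on `(−α, α)`. -/
def unifMeasure (α : ℝ) : Measure ℝ :=
  (ENNReal.ofReal (2 * α))⁻¹ • volume.restrict (Set.Ioo (-α) α)

/-- Law of `(g₀, l₀)` with all `2p` coordinates i.i.d. uniform on `(−α, α)`. -/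
def initMeasure (p : ℕ) (α : ℝ) : Measure ((Fin p → ℝ) × (Fin p → ℝ)) :=
  (Measure.pi fun _ : Fin p => unifMeasure α).prod (Measure.pi fun _ : Fin p => unifMeasure α)

/-!
In the coordinates `u = g + l`, `v = g - l` the signal is `g ∘ l = (u² - v²) / 4`, and a gradient
step multiplies `u` and `v` entrywise by `1 - ε q` and `1 + ε q` with `q` in the row space of `X`.
Hence `|u| ≤ a exp s` and `|v| ≤ a exp (-s)` for some `s` in the row space. Every large entry of
the signal then has the sign of the corresponding entry of `s`, and a vector aligned in this way
with the row space is controlled by its image under `X`. As long as the loss does not increase,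
the iterates are therefore bounded, and on a bounded set a small step does not increase the loss;
so both hold forever.

Let `b` be a least-squares solution. When no entry of `u` or `v` vanishes, the potential
`∑ (u² + v²) / 8 - b⁺ log |u| - b⁻ log |v|` decreases at each step by a multiple of the excess loss,
which is thus summable, as are the `q²`. It follows that `u exp (-s)` and `v exp s` converge to
vectors with nonzero entries, where `s = -∑ ε q`, and that `s` stays bounded. Each cluster point
of `s` is a point of the row space at which a strictly increasing function of the entries is
mapped by `X` to `X b`; there is only one such point, so `s`, `u` and `v` converge, and the excess
loss vanishes in the limit. Almost surely no entry of `g ± l` is zero initially.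
-/

section Matrix

variable {m n : Type*} [Fintype m] [Fintype n]

lemma sq_apply_le_dotProduct_self (z : n → ℝ) (j : n) : z j ^ 2 ≤ z ⬝ᵥ z := by
  rw [pow_two]
  exact Finset.single_le_sum (f := fun j => z j * z j) (fun _ _ => mul_self_nonneg _)
    (Finset.mem_univ j)

/-- The squared Frobenius norm of a real matrix, used as an upper bound for the squared operator
norms of both `X` and `Xᵀ` with respect to the Euclidean norm. -/
def frobeniusSq (X : Matrix m n ℝ) : ℝ := ∑ i, ∑ j, X i j ^ 2

lemma frobeniusSq_nonneg (X : Matrix m n ℝ) : 0 ≤ frobeniusSq X := by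
  unfold frobeniusSq
  positivity

lemma frobeniusSq_transpose (X : Matrix m n ℝ) : frobeniusSq Xᵀ = frobeniusSq X :=
  Finset.sum_comm

lemma mulVec_dotProduct_self_le (X : Matrix m n ℝ) (z : n → ℝ) :
    (X *ᵥ z) ⬝ᵥ (X *ᵥ z) ≤ frobeniusSq X * (z ⬝ᵥ z) := by
  rw [frobeniusSq, Finset.sum_mul]
  refine Finset.sum_le_sum fun i _ => ?_
  have cauchySchwarz := Finset.sum_mul_sq_le_sq_mul_sq Finset.univ (X i) z
  simpa only [mulVec, dotProduct, ← pow_two] using cauchySchwarz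

lemma exists_transpose_mulVec_mulVec_eq (X : Matrix m n ℝ) (y : m → ℝ) :
    ∃ b : n → ℝ, Xᵀ *ᵥ (X *ᵥ b) = Xᵀ *ᵥ y := by
  have range_le : (Xᵀ * X).mulVecLin.range ≤ Xᵀ.mulVecLin.range := by
    rw [mulVecLin_mul]
    exact LinearMap.range_comp_le_range _ _
  have range_eq : (Xᵀ * X).mulVecLin.range = Xᵀ.mulVecLin.range :=
    Submodule.eq_of_le_of_finrank_eq range_le
      ((rank_transpose_mul_self X).trans (rank_transpose X).symm)
  obtain ⟨b, hb⟩ : Xᵀ *ᵥ y ∈ (Xᵀ * X).mulVecLin.range := range_eq ▸ ⟨y, rfl⟩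
  exact ⟨b, (mulVec_mulVec _ _ _).trans hb⟩

lemma mulVec_sub_dotProduct_self_le {X : Matrix m n ℝ} {y : m → ℝ} {b : n → ℝ}
    (hb : Xᵀ *ᵥ (X *ᵥ b) = Xᵀ *ᵥ y) (z : n → ℝ) :
    (X *ᵥ b - y) ⬝ᵥ (X *ᵥ b - y) ≤ (X *ᵥ z - y) ⬝ᵥ (X *ᵥ z - y) := by
  have decomposition : X *ᵥ z - y = (X *ᵥ b - y) + X *ᵥ (z - b) := by
    rw [mulVec_sub]
    abel
  have orthogonal : (X *ᵥ b - y) ⬝ᵥ (X *ᵥ (z - b)) = 0 := by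
    rw [← dotProduct_transpose_mulVec, mulVec_sub, hb, sub_self, dotProduct_zero]
  have square_nonneg : 0 ≤ (X *ᵥ (z - b)) ⬝ᵥ (X *ᵥ (z - b)) :=
    Finset.sum_nonneg fun _ _ => mul_self_nonneg _
  rw [decomposition, add_dotProduct, dotProduct_add, dotProduct_add,
    dotProduct_comm (X *ᵥ (z - b)), orthogonal]
  linarith

lemma exists_norm_mulVec_le (X : Matrix m n ℝ) : ∃ M, 0 ≤ M ∧ ∀ z, ‖X *ᵥ z‖ ≤ M * ‖z‖ :=
  ⟨_, norm_nonneg _, X.mulVecLin.toContinuousLinearMap.le_opNorm⟩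

end Matrix

section SignAlignment

variable {m n : Type*} [Fintype m] [Fintype n]

lemma abs_mul_abs_le_of_mul_nonneg (X : Matrix m n ℝ) {z : n → ℝ} {lam : m → ℝ}
    (hz : ∀ j, 0 ≤ z j * (Xᵀ *ᵥ lam) j) (j : n) :
    |z j| * |(Xᵀ *ᵥ lam) j| ≤ (∑ i, |lam i|) * ‖X *ᵥ z‖ := by
  calc |z j| * |(Xᵀ *ᵥ lam) j| = z j * (Xᵀ *ᵥ lam) j := by rw [← abs_mul, abs_of_nonneg (hz j)]
    _ ≤ z ⬝ᵥ Xᵀ *ᵥ lam := Finset.single_le_sum (f := fun j => z j * (Xᵀ *ᵥ lam) j)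
        (fun j _ => hz j) (Finset.mem_univ j)
    _ = lam ⬝ᵥ X *ᵥ z := dotProduct_transpose_mulVec X z lam
    _ ≤ ∑ i, |lam i| * ‖X *ᵥ z‖ := Finset.sum_le_sum fun i _ => by
        refine (le_abs_self _).trans ?_
        rw [abs_mul]
        gcongr
        exact norm_le_pi_norm (X *ᵥ z) i
    _ = (∑ i, |lam i|) * ‖X *ᵥ z‖ := (Finset.sum_mul ..).symm

lemma norm_le_of_signAligned (X : Matrix m n ℝ) {z : n → ℝ} {lam : m → ℝ}
    (hz : ∀ j, z j ≠ 0 → 0 < z j * (Xᵀ *ᵥ lam) j) :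
    ‖z‖ ≤ (∑ j, (∑ i, |lam i|) / |(Xᵀ *ᵥ lam) j|) * ‖X *ᵥ z‖ := by
  refine (pi_norm_le_iff_of_nonneg (by positivity)).2 fun j => ?_
  obtain hj | hj := eq_or_ne (z j) 0
  · rw [hj, norm_zero]
    positivity
  have hs : 0 < |(Xᵀ *ᵥ lam) j| := abs_pos.2 (right_ne_zero_of_mul (hz j hj).ne')
  have hz_nonneg : ∀ j, 0 ≤ z j * (Xᵀ *ᵥ lam) j := fun j => by
    obtain h | h := eq_or_ne (z j) 0
    · simp [h]
    · exact (hz j h).le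
  calc ‖z j‖ ≤ (∑ i, |lam i|) / |(Xᵀ *ᵥ lam) j| * ‖X *ᵥ z‖ := by
        rw [div_mul_eq_mul_div, le_div_iff₀ hs]
        exact abs_mul_abs_le_of_mul_nonneg X hz_nonneg j
    _ ≤ _ := by
        gcongr
        exact Finset.single_le_sum (f := fun j => (∑ i, |lam i|) / |(Xᵀ *ᵥ lam) j|)
          (fun _ _ => by positivity) (Finset.mem_univ j)

/-- Alignment with `Xᵀ *ᵥ lam` only depends on the sign pattern of that vector, and there are
finitely many patterns. -/
lemma exists_norm_le_of_signAligned (X : Matrix m n ℝ) :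
    ∃ κ, 0 ≤ κ ∧ ∀ (z : n → ℝ) (lam : m → ℝ),
      (∀ j, z j ≠ 0 → 0 < z j * (Xᵀ *ᵥ lam) j) → ‖z‖ ≤ κ * ‖X *ᵥ z‖ := by
  classical
  have bound_of_pattern (τ : n → SignType) : ∃ κ, 0 ≤ κ ∧ ∀ (z : n → ℝ) (lam : m → ℝ),
      (∀ j, SignType.sign ((Xᵀ *ᵥ lam) j) = τ j) →
      (∀ j, z j ≠ 0 → 0 < z j * (Xᵀ *ᵥ lam) j) → ‖z‖ ≤ κ * ‖X *ᵥ z‖ := by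
    by_cases h : ∃ lam₀ : m → ℝ, ∀ j, SignType.sign ((Xᵀ *ᵥ lam₀) j) = τ j
    · obtain ⟨lam₀, hlam₀⟩ := h
      refine ⟨_, ?_, fun z lam hlam hz =>
        norm_le_of_signAligned X (lam := lam₀) fun j hj => ?_⟩
      · positivity
      · rw [← sign_eq_one_iff, sign_mul, hlam₀, ← hlam, ← sign_mul, sign_eq_one_iff]
        exact hz j hj
    · exact ⟨0, le_rfl, fun z lam hlam _ => absurd ⟨lam, hlam⟩ h⟩
  choose κ hκ hbound using bound_of_pattern
  refine ⟨∑ τ, κ τ, Finset.sum_nonneg fun τ _ => hκ τ, fun z lam hz =>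
    (hbound _ z lam (fun _ => rfl) hz).trans ?_⟩
  gcongr
  exact Finset.single_le_sum (fun τ _ => hκ τ) (Finset.mem_univ _)

lemma exists_norm_le_of_signAligned_off_small (X : Matrix m n ℝ) :
    ∃ A, 0 ≤ A ∧ ∀ (β : n → ℝ) (lam : m → ℝ) (r : ℝ), 0 ≤ r →
      (∀ j, r < |β j| → 0 < β j * (Xᵀ *ᵥ lam) j) → ‖β‖ ≤ A * (‖X *ᵥ β‖ + r) := by
  obtain ⟨κ, hκ, hbound⟩ := exists_norm_le_of_signAligned X
  obtain ⟨M, hM, hX⟩ := exists_norm_mulVec_le X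
  refine ⟨κ + (κ * M + 1), by positivity, fun β lam r hr hβ => ?_⟩
  set z : n → ℝ := fun j => if r < |β j| then β j else 0 with hz
  have norm_diff_le : ‖β - z‖ ≤ r := (pi_norm_le_iff_of_nonneg hr).2 fun j => by
    by_cases hj : r < |β j|
    · simpa [hz, hj] using hr
    · simpa [hz, hj] using not_lt.1 hj
  have norm_z_le : ‖z‖ ≤ κ * ‖X *ᵥ z‖ := hbound z lam fun j hj => by
    have large : r < |β j| := by
      by_contra small
      exact hj (if_neg small)
    simpa only [hz, if_pos large] using hβ j large
  have norm_mulVec_z_le : ‖X *ᵥ z‖ ≤ ‖X *ᵥ β‖ + M * r := by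
    calc ‖X *ᵥ z‖ = ‖X *ᵥ β - X *ᵥ (β - z)‖ := by rw [mulVec_sub, sub_sub_cancel]
      _ ≤ ‖X *ᵥ β‖ + ‖X *ᵥ (β - z)‖ := norm_sub_le _ _
      _ ≤ ‖X *ᵥ β‖ + M * r := by grw [hX (β - z), norm_diff_le]
  calc ‖β‖ ≤ ‖z‖ + ‖β - z‖ := norm_le_insert' β z
    _ ≤ κ * (‖X *ᵥ β‖ + M * r) + r := by grw [norm_z_le, norm_mulVec_z_le, norm_diff_le]
    _ ≤ (κ + (κ * M + 1)) * (‖X *ᵥ β‖ + r) := by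
        have : 0 ≤ (κ * M + 1) * ‖X *ᵥ β‖ + κ * r := by positivity
        linarith

end SignAlignment

section Scalar

lemma sq_add_sq_le_abs_sub_add_abs_mul (u v : ℝ) :
    u ^ 2 + v ^ 2 ≤ |u ^ 2 - v ^ 2| + 2 * |u * v| := by
  rw [← sq_abs u, ← sq_abs v, abs_mul]
  obtain h | h := le_total |u| |v|
  · have := neg_le_abs (|u| ^ 2 - |v| ^ 2)
    nlinarith [abs_nonneg u]
  · have := le_abs_self (|u| ^ 2 - |v| ^ 2)
    nlinarith [abs_nonneg v]

lemma log_abs_le_sq (x : ℝ) : Real.log |x| ≤ x ^ 2 := by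
  obtain rfl | hx := eq_or_ne x 0
  · simp
  · have := Real.log_le_sub_one_of_pos (abs_pos.2 hx)
    nlinarith [sq_abs x, sq_nonneg (|x| - 1)]

lemma abs_add_log_one_sub_le {x : ℝ} (hx : |x| ≤ 1 / 2) : |x + Real.log (1 - x)| ≤ 2 * x ^ 2 := by
  have taylor := Real.abs_log_sub_add_sum_range_le (hx.trans_lt (by norm_num)) 1
  simp only [Finset.sum_range_one, zero_add, pow_one, Nat.cast_zero, div_one, one_add_one_eq_two,
    sq_abs] at taylor
  refine taylor.trans ?_
  rw [div_le_iff₀ (by linarith)]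
  nlinarith [sq_nonneg x]

lemma pos_of_sq_lt_sq_of_abs_le_mul_exp {u a s : ℝ} (hu : |u| ≤ a * Real.exp s)
    (hau : a ^ 2 < u ^ 2) : 0 < s := by
  by_contra! hs
  have ha : 0 ≤ a := nonneg_of_mul_nonneg_left ((abs_nonneg u).trans hu) (Real.exp_pos s)
  have hua : |u| ≤ a := hu.trans (mul_le_of_le_one_right ha (Real.exp_le_one_iff.2 hs))
  exact hau.not_ge (sq_le_sq' (abs_le.1 hua).1 (abs_le.1 hua).2)

lemma abs_mul_le_sq_of_abs_le_mul_exp {u v a s : ℝ} (hu : |u| ≤ a * Real.exp s)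
    (hv : |v| ≤ a * Real.exp (-s)) : |u * v| ≤ a ^ 2 := by
  calc |u * v| = |u| * |v| := abs_mul u v
    _ ≤ (a * Real.exp s) * (a * Real.exp (-s)) :=
        mul_le_mul hu hv (abs_nonneg v) ((abs_nonneg u).trans hu)
    _ = a ^ 2 * (Real.exp s * Real.exp (-s)) := by ring
    _ = a ^ 2 := by rw [← Real.exp_add, add_neg_cancel, Real.exp_zero, mul_one]

lemma mul_pos_of_abs_le_mul_exp {u v a s : ℝ} (hu : |u| ≤ a * Real.exp s)
    (hv : |v| ≤ a * Real.exp (-s)) (hβ : a ^ 2 / 4 < |(u ^ 2 - v ^ 2) / 4|) :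
    0 < (u ^ 2 - v ^ 2) / 4 * s := by
  obtain h | h := lt_abs.1 hβ
  · have hs : 0 < s := pos_of_sq_lt_sq_of_abs_le_mul_exp hu (by linarith [sq_nonneg v])
    exact mul_pos (by linarith [sq_nonneg a]) hs
  · have hs : 0 < -s := pos_of_sq_lt_sq_of_abs_le_mul_exp hv (by linarith [sq_nonneg u])
    exact mul_pos_of_neg_of_neg (by linarith [sq_nonneg a]) (by linarith)

lemma exists_sq_sub_sq_mul_step (u v : ℝ) {x : ℝ} (hx : |x| ≤ 1) :
    ∃ r, 0 ≤ r ∧ r ≤ u ^ 2 + v ^ 2 ∧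
      ((u * (1 - x)) ^ 2 - (v * (1 + x)) ^ 2) / 4 = (u ^ 2 - v ^ 2) / 4 - x * r := by
  obtain ⟨hx₁, hx₂⟩ := abs_le.1 hx
  refine ⟨(u ^ 2 + v ^ 2) / 2 - x * ((u ^ 2 - v ^ 2) / 4), ?_, ?_, by ring⟩ <;>
    nlinarith [sq_nonneg u, sq_nonneg v]

lemma summable_of_le_sub_succ {f φ : ℕ → ℝ} {c : ℝ} (hf : ∀ t, 0 ≤ f t)
    (hfφ : ∀ t, f t ≤ φ t - φ (t + 1)) (hφ : ∀ t, c ≤ φ t) : Summable f :=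
  summable_of_sum_range_le (c := φ 0 - c) hf fun T => by
    calc ∑ t ∈ Finset.range T, f t ≤ ∑ t ∈ Finset.range T, (φ t - φ (t + 1)) :=
          Finset.sum_le_sum fun t _ => hfφ t
      _ = φ 0 - φ T := Finset.sum_range_sub' φ T
      _ ≤ φ 0 - c := by gcongr; exact hφ T

lemma mul_exp_sum_eq_of_mul_one_sub {u x : ℕ → ℝ} (hrec : ∀ t, u (t + 1) = u t * (1 - x t))
    (hx : ∀ t, |x t| ≤ 1 / 2) (t : ℕ) :
    u t * Real.exp (∑ i ∈ Finset.range t, x i) =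
      u 0 * Real.exp (∑ i ∈ Finset.range t, (x i + Real.log (1 - x i))) := by
  induction t with
  | zero => simp
  | succ t ih =>
    have hpos : 0 < 1 - x t := by linarith [(abs_le.1 (hx t)).2]
    rw [Finset.sum_range_succ, Finset.sum_range_succ, Real.exp_add, Real.exp_add, Real.exp_add,
      Real.exp_log hpos, hrec]
    linear_combination (1 - x t) * Real.exp (x t) * ih

lemma exists_tendsto_mul_exp_sum {u x : ℕ → ℝ} (hu : u 0 ≠ 0)
    (hrec : ∀ t, u (t + 1) = u t * (1 - x t)) (hx : ∀ t, |x t| ≤ 1 / 2)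
    (hsum : Summable fun t => x t ^ 2) :
    ∃ a, a ≠ 0 ∧ Tendsto (fun t => u t * Real.exp (∑ i ∈ Finset.range t, x i)) atTop (𝓝 a) := by
  have summable_log : Summable fun t => x t + Real.log (1 - x t) :=
    .of_norm_bounded (hsum.mul_left 2) fun t => abs_add_log_one_sub_le (hx t)
  refine ⟨u 0 * Real.exp (∑' t, (x t + Real.log (1 - x t))),
    mul_ne_zero hu (Real.exp_ne_zero _), ?_⟩
  simp only [mul_exp_sum_eq_of_mul_one_sub hrec hx]
  exact (Real.continuous_exp.tendsto _ |>.comp summable_log.hasSum.tendsto_sum_nat).const_mul _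

lemma exists_eventually_le_of_tendsto_mul_exp_neg {u s : ℕ → ℝ} {a W : ℝ} (ha : a ≠ 0)
    (hu : ∀ t, u t ^ 2 ≤ W) (h : Tendsto (fun t => u t * Real.exp (-s t)) atTop (𝓝 a)) :
    ∃ R, ∀ᶠ t in atTop, s t ≤ R := by
  have tendsto_log : Tendsto (fun t => Real.log (u t * Real.exp (-s t))) atTop
      (𝓝 (Real.log a)) := h.log ha
  refine ⟨W - (Real.log a - 1), ?_⟩
  filter_upwards [h.eventually_ne ha, tendsto_log.eventually_const_lt (sub_one_lt _)] with t ht hlog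
  rw [Real.log_mul (left_ne_zero_of_mul ht) (Real.exp_ne_zero _), Real.log_exp,
    ← Real.log_abs (u t)] at hlog
  linarith [log_abs_le_sq (u t), hu t]

end Scalar

section RowSpace

variable {m n : Type*} [Fintype m] [Fintype n]

lemma eq_of_mulVec_eq_of_strictMono (X : Matrix m n ℝ) {φ : n → ℝ → ℝ}
    (hφ : ∀ j, StrictMono (φ j)) {σ τ : n → ℝ} (hσ : σ ∈ Xᵀ.mulVecLin.range)
    (hτ : τ ∈ Xᵀ.mulVecLin.range)
    (h : X *ᵥ (fun j => φ j (σ j)) = X *ᵥ (fun j => φ j (τ j))) : σ = τ := by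
  set d : n → ℝ := fun j => φ j (σ j) - φ j (τ j)
  have mulVec_d : X *ᵥ d = 0 := (mulVec_sub X _ _).trans (sub_eq_zero.2 h)
  obtain ⟨lam, hlam⟩ := sub_mem hσ hτ
  have orthogonal : d ⬝ᵥ (σ - τ) = 0 := by
    rw [← hlam, mulVecLin_apply, dotProduct_transpose_mulVec, mulVec_d, dotProduct_zero]
  have term_pos (j : n) (hj : σ j ≠ τ j) : 0 < d j * (σ - τ) j := by
    obtain hlt | hlt := hj.lt_or_gt
    · exact mul_pos_of_neg_of_neg (sub_neg.2 (hφ j hlt)) (sub_neg.2 hlt)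
    · exact mul_pos (sub_pos.2 (hφ j hlt)) (sub_pos.2 hlt)
  have term_nonneg (j : n) : 0 ≤ d j * (σ - τ) j := by
    obtain hj | hj := eq_or_ne (σ j) (τ j)
    · simp [hj]
    · exact (term_pos j hj).le
  funext j
  by_contra hj
  exact (term_pos j hj).ne'
    ((Finset.sum_eq_zero_iff_of_nonneg fun j _ => term_nonneg j).1 orthogonal j (Finset.mem_univ j))

/-- Cluster points of `s` stay in the row space and solve the same monotone system, whose solution
is unique there. -/
lemma exists_tendsto_of_tendsto_mulVec (X : Matrix m n ℝ) {P : Type*} [TopologicalSpace P]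
    {φ : P → n → ℝ → ℝ} (hcont : ∀ j, Continuous fun q : P × ℝ => φ q.1 j q.2) {ξ : P}
    (hmono : ∀ j, StrictMono (φ ξ j)) {θ : ℕ → P} (hθ : Tendsto θ atTop (𝓝 ξ))
    {s : ℕ → n → ℝ} (hrow : ∀ t, s t ∈ Xᵀ.mulVecLin.range)
    {lo hi : n → ℝ} (hs : ∀ᶠ t in atTop, s t ∈ Set.Icc lo hi) {y : m → ℝ}
    (hy : Tendsto (fun t => X *ᵥ fun j => φ (θ t) j (s t j)) atTop (𝓝 y)) :
    ∃ σ, Tendsto s atTop (𝓝 σ) := by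
  have range_closed : IsClosed (Xᵀ.mulVecLin.range : Set (n → ℝ)) :=
    Submodule.closed_of_finiteDimensional _
  have cluster_spec (σ : n → ℝ) (hσ : MapClusterPt σ atTop s) :
      σ ∈ Xᵀ.mulVecLin.range ∧ X *ᵥ (fun j => φ ξ j (σ j)) = y := by
    obtain ⟨F, hF, hsF⟩ := mapClusterPt_iff_ultrafilter.1 hσ
    refine ⟨range_closed.mem_of_tendsto hsF (.of_forall hrow),
      tendsto_nhds_unique ?_ (hy.mono_left hF)⟩
    have tendsto_coord : Tendsto (fun t j => φ (θ t) j (s t j)) F (𝓝 fun j => φ ξ j (σ j)) :=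
      tendsto_pi_nhds.2 fun j => ((hcont j).tendsto (ξ, σ j)).comp
        ((hθ.mono_left hF).prodMk_nhds (tendsto_pi_nhds.1 hsF j))
    exact (X.mulVecLin.continuous_of_finiteDimensional.tendsto _).comp tendsto_coord
  obtain ⟨σ, -, hσ⟩ :=
    (isCompact_Icc (a := lo) (b := hi)).exists_mapClusterPt (tendsto_principal.2 hs)
  refine ⟨σ, isCompact_Icc.tendsto_nhds_of_unique_mapClusterPt hs fun τ _ hτ => ?_⟩
  obtain ⟨hσ_row, hσ_sol⟩ := cluster_spec σ hσ
  obtain ⟨hτ_row, hτ_sol⟩ := cluster_spec τ hτ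
  exact eq_of_mulVec_eq_of_strictMono X hmono hτ_row hσ_row (hτ_sol.trans hσ_sol.symm)

end RowSpace

section MultiplicativeStep

variable {m n : Type*}

/-- The effective parameter `g ∘ l` in the coordinates `(u, v) = (g + l, g - l)`. -/
def signal (w : (n → ℝ) × (n → ℝ)) : n → ℝ := fun j => (w.1 j ^ 2 - w.2 j ^ 2) / 4

variable [Fintype n]

/-- The prediction error relative to a least-squares solution `b`; it differs from `X β - y` by a
vector orthogonal to the column space of `X`. -/
def residualVec (X : Matrix m n ℝ) (b : n → ℝ) (w : (n → ℝ) × (n → ℝ)) : m → ℝ :=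
  X *ᵥ (signal w - b)

lemma continuous_residualVec (X : Matrix m n ℝ) (b : n → ℝ) : Continuous (residualVec X b) := by
  unfold residualVec signal
  exact X.mulVecLin.continuous_of_finiteDimensional.comp (by fun_prop)

variable [Fintype m]

/-- The gradient of the least-squares loss at the effective parameter, up to the factor `n⁻¹`. -/
def gradVec (X : Matrix m n ℝ) (b : n → ℝ) (w : (n → ℝ) × (n → ℝ)) : n → ℝ :=
  Xᵀ *ᵥ residualVec X b w

/-- The gap between the least-squares loss and its minimum, up to the factor `(2n)⁻¹`. -/
def excessLoss (X : Matrix m n ℝ) (b : n → ℝ) (w : (n → ℝ) × (n → ℝ)) : ℝ :=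
  residualVec X b w ⬝ᵥ residualVec X b w

/-- A gradient step in the coordinates `(u, v) = (g + l, g - l)`, where it is multiplicative. -/
def mulStep (X : Matrix m n ℝ) (b : n → ℝ) (ε : ℝ) (w : (n → ℝ) × (n → ℝ)) :
    (n → ℝ) × (n → ℝ) :=
  (fun j => w.1 j * (1 - ε * gradVec X b w j), fun j => w.2 j * (1 + ε * gradVec X b w j))

/-- The coordinates of `u` and `v` are dominated by `a * exp s` and `a * exp (-s)` for some `s` in
the row space of `X`. -/
def InEnvelope (X : Matrix m n ℝ) (a : ℝ) (w : (n → ℝ) × (n → ℝ)) : Prop :=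
  ∃ lam : m → ℝ, ∀ j, |w.1 j| ≤ a * Real.exp ((Xᵀ *ᵥ lam) j) ∧
    |w.2 j| ≤ a * Real.exp (-(Xᵀ *ᵥ lam) j)

/-- The step size `ε` is small enough at `w` for the excess loss and the potential to decrease.
The summand `16 * |b j|` makes a single bound `W` serve both. -/
structure IsStable (X : Matrix m n ℝ) (b : n → ℝ) (ε W : ℝ) (w : (n → ℝ) × (n → ℝ)) : Prop where
  step_nonneg : 0 ≤ ε
  bound_nonneg : 0 ≤ W
  step_mul_le : ε * (frobeniusSq X * W) ≤ 1 / 2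
  abs_step_mul_gradVec_le : ∀ j, |ε * gradVec X b w j| ≤ 1 / 2
  sq_add_sq_le : ∀ j, w.1 j ^ 2 + w.2 j ^ 2 + 16 * |b j| ≤ W

variable {X : Matrix m n ℝ} {b : n → ℝ} {a ε W : ℝ} {w : (n → ℝ) × (n → ℝ)}

lemma excessLoss_nonneg : 0 ≤ excessLoss X b w :=
  Finset.sum_nonneg fun _ _ => mul_self_nonneg _

lemma gradVec_dotProduct (z : n → ℝ) :
    gradVec X b w ⬝ᵥ z = residualVec X b w ⬝ᵥ (X *ᵥ z) := by
  rw [dotProduct_comm, gradVec, dotProduct_transpose_mulVec]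

lemma gradVec_dotProduct_self_le :
    gradVec X b w ⬝ᵥ gradVec X b w ≤ frobeniusSq X * excessLoss X b w := by
  rw [← frobeniusSq_transpose]
  exact mulVec_dotProduct_self_le _ _

lemma sq_gradVec_apply_le (j : n) : gradVec X b w j ^ 2 ≤ frobeniusSq X * excessLoss X b w :=
  (sq_apply_le_dotProduct_self _ j).trans gradVec_dotProduct_self_le

lemma norm_residualVec_le_sqrt : ‖residualVec X b w‖ ≤ √(excessLoss X b w) :=
  (pi_norm_le_iff_of_nonneg (Real.sqrt_nonneg _)).2 fun i =>
    Real.abs_le_sqrt (sq_apply_le_dotProduct_self _ i)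

lemma excessLoss_eq_add {w' : (n → ℝ) × (n → ℝ)} :
    excessLoss X b w' = excessLoss X b w + 2 * (gradVec X b w ⬝ᵥ (signal w' - signal w)) +
      (X *ᵥ (signal w' - signal w)) ⬝ᵥ (X *ᵥ (signal w' - signal w)) := by
  set d := signal w' - signal w with hd
  have residual_eq : residualVec X b w' = residualVec X b w + X *ᵥ d := by
    rw [residualVec, residualVec, ← mulVec_add, hd]
    congr 1
    abel
  rw [excessLoss, residual_eq, gradVec_dotProduct, excessLoss, add_dotProduct, dotProduct_add,
    dotProduct_add, dotProduct_comm (X *ᵥ d) (residualVec X b w)]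
  ring

lemma IsStable.excessLoss_mulStep_le (h : IsStable X b ε W w) :
    excessLoss X b (mulStep X b ε w) ≤ excessLoss X b w := by
  set d := signal (mulStep X b ε w) - signal w with hd
  have quadratic_le : 2 * (gradVec X b w ⬝ᵥ d) + frobeniusSq X * (d ⬝ᵥ d) ≤ 0 := by
    simp only [dotProduct, Finset.mul_sum, ← Finset.sum_add_distrib]
    refine Finset.sum_nonpos fun j _ => ?_
    obtain ⟨r, hr, hrw, hstep⟩ := exists_sq_sub_sq_mul_step (w.1 j) (w.2 j)
      ((h.abs_step_mul_gradVec_le j).trans (by norm_num))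
    have hdj : d j = -(ε * gradVec X b w j * r) := by
      simp only [hd, signal, mulStep, Pi.sub_apply, hstep, sub_sub_cancel_left]
    have step_mul_rate_le : ε * (frobeniusSq X * r) ≤ 1 / 2 := by
      refine le_trans ?_ h.step_mul_le
      have := h.step_nonneg
      have := frobeniusSq_nonneg X
      gcongr
      linarith [h.sq_add_sq_le j, abs_nonneg (b j)]
    calc 2 * (gradVec X b w j * d j) + frobeniusSq X * (d j * d j)
        = ε * r * gradVec X b w j ^ 2 * (ε * (frobeniusSq X * r) - 2) := by rw [hdj]; ring
      _ ≤ 0 := mul_nonpos_of_nonneg_of_nonpos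
          (mul_nonneg (mul_nonneg h.step_nonneg hr) (sq_nonneg _)) (by linarith)
  rw [excessLoss_eq_add (w := w)]
  linarith [mulVec_dotProduct_self_le X d]

lemma IsStable.mulStep_ne_zero (h : IsStable X b ε W w) (hw : ∀ j, w.1 j ≠ 0 ∧ w.2 j ≠ 0) (j : n) :
    (mulStep X b ε w).1 j ≠ 0 ∧ (mulStep X b ε w).2 j ≠ 0 := by
  obtain ⟨hlo, hhi⟩ := abs_le.1 (h.abs_step_mul_gradVec_le j)
  exact ⟨mul_ne_zero (hw j).1 (by linarith), mul_ne_zero (hw j).2 (by linarith)⟩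

lemma InEnvelope.of_norm_le (hw : ‖w‖ ≤ a) : InEnvelope X a w :=
  ⟨0, fun j => by
    simpa using And.intro ((norm_le_pi_norm w.1 j).trans ((norm_fst_le w).trans hw))
      ((norm_le_pi_norm w.2 j).trans ((norm_snd_le w).trans hw))⟩

lemma InEnvelope.mulStep (hw : InEnvelope X a w) (h : IsStable X b ε W w) :
    InEnvelope X a (mulStep X b ε w) := by
  obtain ⟨lam, hlam⟩ := hw
  refine ⟨lam - ε • residualVec X b w, fun j => ?_⟩
  obtain ⟨hlo, hhi⟩ := abs_le.1 (h.abs_step_mul_gradVec_le j)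
  set x := ε * gradVec X b w j
  have exponent_eq : (Xᵀ *ᵥ (lam - ε • residualVec X b w)) j = (Xᵀ *ᵥ lam) j - x := by
    rw [mulVec_sub, mulVec_smul]
    rfl
  have abs_one_sub_le : |1 - x| ≤ Real.exp (-x) := by
    rw [abs_of_nonneg (by linarith)]
    exact Real.one_sub_le_exp_neg x
  have abs_one_add_le : |1 + x| ≤ Real.exp x := by
    rw [abs_of_nonneg (by linarith), add_comm]
    exact Real.add_one_le_exp x
  rw [exponent_eq, neg_sub, sub_eq_neg_add, sub_eq_add_neg, Real.exp_add, Real.exp_add]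
  constructor
  · calc |w.1 j * (1 - x)| = |w.1 j| * |1 - x| := abs_mul _ _
      _ ≤ (a * Real.exp ((Xᵀ *ᵥ lam) j)) * Real.exp (-x) :=
          mul_le_mul (hlam j).1 abs_one_sub_le (abs_nonneg _) ((abs_nonneg _).trans (hlam j).1)
      _ = a * (Real.exp (-x) * Real.exp ((Xᵀ *ᵥ lam) j)) := by ring
  · calc |w.2 j * (1 + x)| = |w.2 j| * |1 + x| := abs_mul _ _
      _ ≤ (a * Real.exp (-(Xᵀ *ᵥ lam) j)) * Real.exp x :=
          mul_le_mul (hlam j).2 abs_one_add_le (abs_nonneg _) ((abs_nonneg _).trans (hlam j).2)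
      _ = a * (Real.exp x * Real.exp (-(Xᵀ *ᵥ lam) j)) := by ring

lemma InEnvelope.exists_sq_add_sq_le (X : Matrix m n ℝ) (b : n → ℝ) (a E : ℝ) :
    ∃ W, ∀ w, InEnvelope X a w → excessLoss X b w ≤ E → ∀ j, w.1 j ^ 2 + w.2 j ^ 2 ≤ W := by
  obtain ⟨A, hA, hbound⟩ := exists_norm_le_of_signAligned_off_small X
  refine ⟨4 * (A * (√E + ‖X *ᵥ b‖ + a ^ 2 / 4)) + 2 * a ^ 2, fun w ⟨lam, hlam⟩ hE j => ?_⟩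
  have norm_mulVec_signal_le : ‖X *ᵥ signal w‖ ≤ √E + ‖X *ᵥ b‖ := by
    calc ‖X *ᵥ signal w‖ = ‖residualVec X b w + X *ᵥ b‖ := by
          rw [residualVec, mulVec_sub, sub_add_cancel]
      _ ≤ ‖residualVec X b w‖ + ‖X *ᵥ b‖ := norm_add_le _ _
      _ ≤ √E + ‖X *ᵥ b‖ := by
          gcongr
          exact norm_residualVec_le_sqrt.trans (Real.sqrt_le_sqrt hE)
  have norm_signal_le : ‖signal w‖ ≤ A * (√E + ‖X *ᵥ b‖ + a ^ 2 / 4) := by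
    refine (hbound (signal w) lam (a ^ 2 / 4) (by positivity) fun j hj =>
      mul_pos_of_abs_le_mul_exp (hlam j).1 (hlam j).2 hj).trans ?_
    gcongr
  have abs_sub_le : |w.1 j ^ 2 - w.2 j ^ 2| ≤ 4 * ‖signal w‖ := by
    have := norm_le_pi_norm (signal w) j
    rw [signal, Real.norm_eq_abs, abs_div, abs_of_pos (four_pos (α := ℝ))] at this
    linarith
  linarith [sq_add_sq_le_abs_sub_add_abs_mul (w.1 j) (w.2 j),
    abs_mul_le_sq_of_abs_le_mul_exp (hlam j).1 (hlam j).2]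

end MultiplicativeStep

section Potential

/-- The convex function of `(log |u|, log |v|)` whose derivative along `(-1, 1)` is
`b - (u² - v²) / 4`, so that it decreases when the signal `(u² - v²) / 4` is pulled towards `b`. -/
def barrier (b u v : ℝ) : ℝ := (u ^ 2 + v ^ 2) / 8 - b⁺ * Real.log |u| - b⁻ * Real.log |v|

lemma barrier_mul_step_le (b : ℝ) {u v x : ℝ} (hu : u ≠ 0) (hv : v ≠ 0) (hx : |x| ≤ 1 / 2) :
    barrier b (u * (1 - x)) (v * (1 + x)) ≤
      barrier b u v - x * ((u ^ 2 - v ^ 2) / 4 - b) + x ^ 2 * ((u ^ 2 + v ^ 2) / 8 + 2 * |b|) := by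
  obtain ⟨hlo, hhi⟩ := abs_le.1 hx
  have log_one_sub_ge : -x - 2 * x ^ 2 ≤ Real.log (1 - x) := by
    linarith [neg_abs_le (x + Real.log (1 - x)), abs_add_log_one_sub_le hx]
  have log_one_add_ge : x - 2 * x ^ 2 ≤ Real.log (1 + x) := by
    have := abs_add_log_one_sub_le (x := -x) (by rwa [abs_neg])
    rw [sub_neg_eq_add, neg_sq] at this
    linarith [neg_abs_le (-x + Real.log (1 + x))]
  have log_left : Real.log |u * (1 - x)| = Real.log |u| + Real.log (1 - x) := by
    rw [Real.log_abs, Real.log_abs, Real.log_mul hu (by linarith)]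
  have log_right : Real.log |v * (1 + x)| = Real.log |v| + Real.log (1 + x) := by
    rw [Real.log_abs, Real.log_abs, Real.log_mul hv (by linarith)]
  have mul_eq : x * b = x * b⁺ - x * b⁻ := by rw [← mul_sub, posPart_sub_negPart]
  rw [barrier, barrier, log_left, log_right, ← posPart_add_negPart b]
  linarith [mul_le_mul_of_nonneg_left log_one_sub_ge (posPart_nonneg b),
    mul_le_mul_of_nonneg_left log_one_add_ge (negPart_nonneg b)]

lemma neg_abs_mul_le_barrier (b u v : ℝ) : -(|b| * (u ^ 2 + v ^ 2)) ≤ barrier b u v := by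
  rw [barrier, ← posPart_add_negPart b]
  nlinarith [posPart_nonneg b, negPart_nonneg b, sq_nonneg u, sq_nonneg v,
    mul_le_mul_of_nonneg_left (log_abs_le_sq u) (posPart_nonneg b),
    mul_le_mul_of_nonneg_left (log_abs_le_sq v) (negPart_nonneg b)]

variable {m n : Type*} [Fintype n]

/-- The Lyapunov function of the multiplicative iteration. -/
def potential (b : n → ℝ) (w : (n → ℝ) × (n → ℝ)) : ℝ := ∑ j, barrier (b j) (w.1 j) (w.2 j)

variable [Fintype m] {X : Matrix m n ℝ} {b : n → ℝ} {ε W : ℝ} {w : (n → ℝ) × (n → ℝ)}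

lemma IsStable.neg_le_potential (h : IsStable X b ε W w) : -∑ j, |b j| * W ≤ potential b w := by
  rw [← Finset.sum_neg_distrib]
  refine Finset.sum_le_sum fun j _ => le_trans ?_ (neg_abs_mul_le_barrier _ _ _)
  gcongr
  linarith [h.sq_add_sq_le j, abs_nonneg (b j)]

lemma IsStable.barrier_mulStep_le (h : IsStable X b ε W w) (hw : ∀ j, w.1 j ≠ 0 ∧ w.2 j ≠ 0)
    (j : n) :
    barrier (b j) ((mulStep X b ε w).1 j) ((mulStep X b ε w).2 j) ≤
      barrier (b j) (w.1 j) (w.2 j) - ε * (gradVec X b w j * (signal w - b) j) +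
        ε ^ 2 * W / 8 * (gradVec X b w j * gradVec X b w j) := by
  refine (barrier_mul_step_le (b j) (hw j).1 (hw j).2 (h.abs_step_mul_gradVec_le j)).trans ?_
  have second_order_le : (ε * gradVec X b w j) ^ 2 * ((w.1 j ^ 2 + w.2 j ^ 2) / 8 + 2 * |b j|) ≤
      (ε * gradVec X b w j) ^ 2 * (W / 8) := by
    gcongr
    linarith [h.sq_add_sq_le j]
  have signal_sub_apply : (signal w - b) j = (w.1 j ^ 2 - w.2 j ^ 2) / 4 - b j := rfl
  rw [signal_sub_apply]
  linarith

lemma IsStable.potential_mulStep_le (h : IsStable X b ε W w) (hw : ∀ j, w.1 j ≠ 0 ∧ w.2 j ≠ 0) :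
    potential b (mulStep X b ε w) ≤ potential b w - ε / 2 * excessLoss X b w := by
  have excessLoss_eq : gradVec X b w ⬝ᵥ (signal w - b) = excessLoss X b w := gradVec_dotProduct _
  have second_order_le : ε ^ 2 * W / 8 * (gradVec X b w ⬝ᵥ gradVec X b w) ≤
      ε / 2 * excessLoss X b w := by
    calc ε ^ 2 * W / 8 * (gradVec X b w ⬝ᵥ gradVec X b w)
        ≤ ε ^ 2 * W / 8 * (frobeniusSq X * excessLoss X b w) := by
          have := h.bound_nonneg
          gcongr
          exact gradVec_dotProduct_self_le
      _ = ε * excessLoss X b w / 8 * (ε * (frobeniusSq X * W)) := by ring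
      _ ≤ ε * excessLoss X b w / 8 * (1 / 2) := by
          have := mul_nonneg h.step_nonneg (excessLoss_nonneg (X := X) (b := b) (w := w))
          gcongr
          exact h.step_mul_le
      _ ≤ ε / 2 * excessLoss X b w := by
          linarith [mul_nonneg h.step_nonneg (excessLoss_nonneg (X := X) (b := b) (w := w))]
  calc potential b (mulStep X b ε w)
      ≤ potential b w - ε * (gradVec X b w ⬝ᵥ (signal w - b)) +
          ε ^ 2 * W / 8 * (gradVec X b w ⬝ᵥ gradVec X b w) := by
        simp only [potential, dotProduct, Finset.mul_sum, ← Finset.sum_sub_distrib,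
          ← Finset.sum_add_distrib]
        exact Finset.sum_le_sum fun j _ => h.barrier_mulStep_le hw j
    _ ≤ potential b w - ε / 2 * excessLoss X b w := by
        rw [excessLoss_eq]
        linarith

end Potential

section Trajectory

/-- The signal `(u² - v²) / 4` after `u` and `v` have been multiplied by `exp s` and `exp (-s)`. -/
def tiltedSignal (u v s : ℝ) : ℝ := ((u * Real.exp s) ^ 2 - (v * Real.exp (-s)) ^ 2) / 4

lemma strictMono_tiltedSignal {u : ℝ} (hu : u ≠ 0) (v : ℝ) : StrictMono (tiltedSignal u v) := by
  intro s t hst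
  have left_lt : (u * Real.exp s) ^ 2 < (u * Real.exp t) ^ 2 := by
    rw [mul_pow, mul_pow]
    gcongr
  have right_le : (v * Real.exp (-t)) ^ 2 ≤ (v * Real.exp (-s)) ^ 2 := by
    rw [mul_pow, mul_pow]
    gcongr
  unfold tiltedSignal
  linarith

lemma tiltedSignal_mul_exp (u v s : ℝ) :
    tiltedSignal (u * Real.exp (-s)) (v * Real.exp s) s = (u ^ 2 - v ^ 2) / 4 := by
  rw [tiltedSignal, mul_assoc, mul_assoc, ← Real.exp_add, ← Real.exp_add, neg_add_cancel,
    add_neg_cancel, Real.exp_zero, mul_one, mul_one]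

variable {m n : Type*} [Fintype m] [Fintype n]
variable {X : Matrix m n ℝ} {b : n → ℝ} {ε W : ℝ} {w : (n → ℝ) × (n → ℝ)}

lemma iterate_mulStep_ne_zero (h : ∀ t, IsStable X b ε W ((mulStep X b ε)^[t] w))
    (hw : ∀ j, w.1 j ≠ 0 ∧ w.2 j ≠ 0) (t : ℕ) :
    ∀ j, ((mulStep X b ε)^[t] w).1 j ≠ 0 ∧ ((mulStep X b ε)^[t] w).2 j ≠ 0 := by
  induction t with
  | zero => exact hw
  | succ t ih =>
    rw [Function.iterate_succ_apply']
    exact (h t).mulStep_ne_zero ih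

lemma summable_excessLoss_iterate (hε : 0 < ε)
    (h : ∀ t, IsStable X b ε W ((mulStep X b ε)^[t] w)) (hw : ∀ j, w.1 j ≠ 0 ∧ w.2 j ≠ 0) :
    Summable fun t => excessLoss X b ((mulStep X b ε)^[t] w) := by
  refine (summable_mul_left_iff (half_pos hε).ne').1 <| summable_of_le_sub_succ
    (φ := fun t => potential b ((mulStep X b ε)^[t] w))
    (fun t => mul_nonneg (half_pos hε).le excessLoss_nonneg) (fun t => ?_)
    fun t => (h t).neg_le_potential
  rw [Function.iterate_succ_apply']
  linarith [(h t).potential_mulStep_le (iterate_mulStep_ne_zero h hw t)]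

lemma tendsto_residualVec_iterate (hε : 0 < ε)
    (h : ∀ t, IsStable X b ε W ((mulStep X b ε)^[t] w)) (hw : ∀ j, w.1 j ≠ 0 ∧ w.2 j ≠ 0) :
    Tendsto (fun t => residualVec X b ((mulStep X b ε)^[t] w)) atTop (𝓝 0) := by
  refine squeeze_zero_norm (fun t => norm_residualVec_le_sqrt) ?_
  simpa using (summable_excessLoss_iterate hε h hw).tendsto_atTop_zero.sqrt

lemma summable_sq_step_mul_gradVec_iterate (hε : 0 < ε)
    (h : ∀ t, IsStable X b ε W ((mulStep X b ε)^[t] w)) (hw : ∀ j, w.1 j ≠ 0 ∧ w.2 j ≠ 0) (j : n) :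
    Summable fun t => (ε * gradVec X b ((mulStep X b ε)^[t] w) j) ^ 2 := by
  simp only [mul_pow]
  exact ((summable_excessLoss_iterate hε h hw).mul_left (frobeniusSq X)).of_nonneg_of_le
    (fun t => sq_nonneg _) (fun t => sq_gradVec_apply_le j) |>.mul_left _

/-- The first-order approximation of the logarithmic growth of `u` along the iteration. -/
def logGrowth (X : Matrix m n ℝ) (b : n → ℝ) (ε : ℝ) (w : (n → ℝ) × (n → ℝ)) (t : ℕ) : n → ℝ :=
  fun j => ∑ i ∈ Finset.range t, -(ε * gradVec X b ((mulStep X b ε)^[i] w) j)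

lemma logGrowth_mem_range (t : ℕ) : logGrowth X b ε w t ∈ Xᵀ.mulVecLin.range := by
  refine ⟨∑ i ∈ Finset.range t, -(ε • residualVec X b ((mulStep X b ε)^[i] w)), ?_⟩
  funext j
  simp only [map_sum, map_neg, map_smul, Finset.sum_apply, logGrowth]
  rfl

lemma exists_tendsto_iterate_fst_mul_exp (hε : 0 < ε)
    (h : ∀ t, IsStable X b ε W ((mulStep X b ε)^[t] w)) (hw : ∀ j, w.1 j ≠ 0 ∧ w.2 j ≠ 0) (j : n) :
    ∃ a, a ≠ 0 ∧ Tendsto (fun t => ((mulStep X b ε)^[t] w).1 j * Real.exp (-logGrowth X b ε w t j))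
      atTop (𝓝 a) := by
  simp only [logGrowth, Finset.sum_neg_distrib, neg_neg]
  refine exists_tendsto_mul_exp_sum (u := fun t => ((mulStep X b ε)^[t] w).1 j) (hw j).1
    (fun t => ?_) (fun t => (h t).abs_step_mul_gradVec_le j)
    (summable_sq_step_mul_gradVec_iterate hε h hw j)
  rw [Function.iterate_succ_apply']
  rfl

lemma exists_tendsto_iterate_snd_mul_exp (hε : 0 < ε)
    (h : ∀ t, IsStable X b ε W ((mulStep X b ε)^[t] w)) (hw : ∀ j, w.1 j ≠ 0 ∧ w.2 j ≠ 0) (j : n) :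
    ∃ c, c ≠ 0 ∧ Tendsto (fun t => ((mulStep X b ε)^[t] w).2 j * Real.exp (logGrowth X b ε w t j))
      atTop (𝓝 c) := by
  refine exists_tendsto_mul_exp_sum (u := fun t => ((mulStep X b ε)^[t] w).2 j) (hw j).2
    (fun t => ?_) (fun t => ?_) ?_
  · rw [Function.iterate_succ_apply', sub_neg_eq_add]
    rfl
  · rw [abs_neg]
    exact (h t).abs_step_mul_gradVec_le j
  · simpa only [neg_sq] using summable_sq_step_mul_gradVec_iterate hε h hw j

lemma exists_eventually_logGrowth_mem_Icc (hε : 0 < ε)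
    (h : ∀ t, IsStable X b ε W ((mulStep X b ε)^[t] w)) (hw : ∀ j, w.1 j ≠ 0 ∧ w.2 j ≠ 0) :
    ∃ lo hi, ∀ᶠ t in atTop, logGrowth X b ε w t ∈ Set.Icc lo hi := by
  have bounded_above (j : n) : ∃ R, ∀ᶠ t in atTop, logGrowth X b ε w t j ≤ R := by
    obtain ⟨a, ha, htendsto⟩ := exists_tendsto_iterate_fst_mul_exp hε h hw j
    refine exists_eventually_le_of_tendsto_mul_exp_neg (W := W) ha (fun t => ?_) htendsto
    linarith [(h t).sq_add_sq_le j, abs_nonneg (b j), sq_nonneg (((mulStep X b ε)^[t] w).2 j)]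
  have bounded_below (j : n) : ∃ R, ∀ᶠ t in atTop, -logGrowth X b ε w t j ≤ R := by
    obtain ⟨c, hc, htendsto⟩ := exists_tendsto_iterate_snd_mul_exp hε h hw j
    refine exists_eventually_le_of_tendsto_mul_exp_neg (W := W) hc
      (u := fun t => ((mulStep X b ε)^[t] w).2 j) (fun t => ?_) (by simpa only [neg_neg])
    linarith [(h t).sq_add_sq_le j, abs_nonneg (b j), sq_nonneg (((mulStep X b ε)^[t] w).1 j)]
  choose hi hhi using bounded_above
  choose lo hlo using bounded_below
  refine ⟨-lo, hi, ?_⟩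
  filter_upwards [eventually_all.2 hhi, eventually_all.2 hlo] with t ht_hi ht_lo
  exact ⟨fun j => neg_le.1 (ht_lo j), ht_hi⟩

lemma exists_tendsto_logGrowth (hε : 0 < ε)
    (h : ∀ t, IsStable X b ε W ((mulStep X b ε)^[t] w)) (hw : ∀ j, w.1 j ≠ 0 ∧ w.2 j ≠ 0) :
    ∃ σ, Tendsto (logGrowth X b ε w) atTop (𝓝 σ) := by
  choose a ha htendsto_fst using exists_tendsto_iterate_fst_mul_exp hε h hw
  choose c _ htendsto_snd using exists_tendsto_iterate_snd_mul_exp hε h hw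
  obtain ⟨lo, hi, hbounded⟩ := exists_eventually_logGrowth_mem_Icc hε h hw
  have tendsto_mulVec_signal :
      Tendsto (fun t => X *ᵥ signal ((mulStep X b ε)^[t] w)) atTop (𝓝 (X *ᵥ b)) := by
    have := (tendsto_residualVec_iterate hε h hw).add_const (X *ᵥ b)
    simpa only [residualVec, mulVec_sub, sub_add_cancel, zero_add] using this
  refine exists_tendsto_of_tendsto_mulVec X (ξ := (a, c))
    (φ := fun q j => tiltedSignal (q.1 j) (q.2 j)) (fun j => ?_)
    (fun j => strictMono_tiltedSignal (ha j) (c j))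
    ((tendsto_pi_nhds.2 htendsto_fst).prodMk_nhds (tendsto_pi_nhds.2 htendsto_snd))
    logGrowth_mem_range hbounded (y := X *ᵥ b) ?_
  · unfold tiltedSignal
    fun_prop
  · simp only [tiltedSignal_mul_exp]
    exact tendsto_mulVec_signal

theorem exists_tendsto_iterate_mulStep (hε : 0 < ε)
    (h : ∀ t, IsStable X b ε W ((mulStep X b ε)^[t] w)) (hw : ∀ j, w.1 j ≠ 0 ∧ w.2 j ≠ 0) :
    ∃ w', Tendsto (fun t => (mulStep X b ε)^[t] w) atTop (𝓝 w') ∧ residualVec X b w' = 0 := by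
  choose a _ htendsto_fst using exists_tendsto_iterate_fst_mul_exp hε h hw
  choose c _ htendsto_snd using exists_tendsto_iterate_snd_mul_exp hε h hw
  obtain ⟨σ, hσ⟩ := exists_tendsto_logGrowth hε h hw
  have tendsto_growth (j : n) := tendsto_pi_nhds.1 hσ j
  have tendsto_fst (j : n) : Tendsto (fun t => ((mulStep X b ε)^[t] w).1 j) atTop
      (𝓝 (a j * Real.exp (σ j))) := by
    refine ((htendsto_fst j).mul (tendsto_growth j).rexp).congr fun t => ?_
    rw [mul_assoc, ← Real.exp_add, neg_add_cancel, Real.exp_zero, mul_one]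
  have tendsto_snd (j : n) : Tendsto (fun t => ((mulStep X b ε)^[t] w).2 j) atTop
      (𝓝 (c j * Real.exp (-σ j))) := by
    refine ((htendsto_snd j).mul (tendsto_growth j).neg.rexp).congr fun t => ?_
    rw [mul_assoc, ← Real.exp_add, add_neg_cancel, Real.exp_zero, mul_one]
  have tendsto_iterate :=
    (tendsto_pi_nhds.2 tendsto_fst).prodMk_nhds (tendsto_pi_nhds.2 tendsto_snd)
  exact ⟨_, tendsto_iterate, tendsto_nhds_unique
    (((continuous_residualVec X b).tendsto _).comp tendsto_iterate)
    (tendsto_residualVec_iterate hε h hw)⟩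

end Trajectory

section SmallStep

variable {m n : Type*} [Fintype m] [Fintype n]

lemma eventually_isStable (X : Matrix m n ℝ) (b : n → ℝ) (a E : ℝ) :
    ∃ W, ∀ᶠ ε in 𝓝[>] 0, ∀ w, InEnvelope X a w → excessLoss X b w ≤ E → IsStable X b ε W w := by
  obtain ⟨W₀, hW₀⟩ := InEnvelope.exists_sq_add_sq_le X b a E
  set W := |W₀| + 16 * ∑ j, |b j|
  have eventually_small (C : ℝ) : ∀ᶠ ε in 𝓝[>] (0 : ℝ), ε * C ≤ 1 / 2 := by
    have : Tendsto (fun ε : ℝ => ε * C) (𝓝[>] 0) (𝓝 0) := by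
      simpa using (tendsto_id.mul_const C).mono_left (nhdsWithin_le_nhds (a := (0 : ℝ)))
    exact this.eventually_le_const (by norm_num)
  refine ⟨W, ?_⟩
  filter_upwards [eventually_small (frobeniusSq X * W), eventually_small √(frobeniusSq X * E),
    self_mem_nhdsWithin] with ε hεW hεE hε w hw hE
  rw [Set.mem_Ioi] at hε
  refine ⟨hε.le, by positivity, hεW, fun j => ?_, fun j => ?_⟩
  · rw [abs_mul, abs_of_pos hε]
    refine le_trans ?_ hεE
    gcongr
    refine Real.abs_le_sqrt ((sq_gradVec_apply_le j).trans ?_)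
    gcongr
    exact frobeniusSq_nonneg X
  · have := Finset.single_le_sum (f := fun j => |b j|) (fun _ _ => abs_nonneg _) (Finset.mem_univ j)
    linarith [hW₀ w hw hE j, le_abs_self W₀]

lemma exists_excessLoss_le_of_norm_le (X : Matrix m n ℝ) (b : n → ℝ) (a : ℝ) :
    ∃ E, ∀ w : (n → ℝ) × (n → ℝ), ‖w‖ ≤ a → excessLoss X b w ≤ E := by
  have continuous_excessLoss : Continuous (excessLoss X b) :=
    (continuous_residualVec X b).dotProduct (continuous_residualVec X b)
  obtain ⟨E, hE⟩ := (isCompact_closedBall (0 : (n → ℝ) × (n → ℝ)) a).bddAbove_image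
    continuous_excessLoss.continuousOn
  exact ⟨E, fun w hw => hE ⟨w, mem_closedBall_zero_iff.2 hw, rfl⟩⟩

lemma eventually_isStable_iterate (X : Matrix m n ℝ) (b : n → ℝ) (a : ℝ) :
    ∃ W, ∀ᶠ ε in 𝓝[>] 0, ∀ w : (n → ℝ) × (n → ℝ), ‖w‖ ≤ a →
      ∀ t, IsStable X b ε W ((mulStep X b ε)^[t] w) := by
  obtain ⟨E, hE⟩ := exists_excessLoss_le_of_norm_le X b a
  obtain ⟨W, hW⟩ := eventually_isStable X b a E
  refine ⟨W, hW.mono fun ε hε w hw t => ?_⟩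
  have invariant : InEnvelope X a ((mulStep X b ε)^[t] w) ∧
      excessLoss X b ((mulStep X b ε)^[t] w) ≤ E := by
    induction t with
    | zero => exact ⟨.of_norm_le hw, hE w hw⟩
    | succ t ih =>
      have stable := hε _ ih.1 ih.2
      rw [Function.iterate_succ_apply']
      exact ⟨ih.1.mulStep stable, stable.excessLoss_mulStep_le.trans ih.2⟩
  exact hε _ invariant.1 invariant.2

theorem eventually_exists_tendsto_iterate_mulStep (X : Matrix m n ℝ) (b : n → ℝ) (a : ℝ) :
    ∀ᶠ ε in 𝓝[>] 0, ∀ w : (n → ℝ) × (n → ℝ), ‖w‖ ≤ a → (∀ j, w.1 j ≠ 0 ∧ w.2 j ≠ 0) →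
      ∃ w', Tendsto (fun t => (mulStep X b ε)^[t] w) atTop (𝓝 w') ∧ residualVec X b w' = 0 := by
  obtain ⟨W, hW⟩ := eventually_isStable_iterate X b a
  filter_upwards [hW, self_mem_nhdsWithin] with ε hstable hε w hw hne
  exact exists_tendsto_iterate_mulStep hε (hstable w hw) hne

end SmallStep

section GradientDescent

/-- The change of coordinates `(g, l) ↦ (g + l, g - l)`, which makes gradient steps
multiplicative. -/
def sumDiff {n : Type*} : (n → ℝ) × (n → ℝ) ≃ₜ (n → ℝ) × (n → ℝ) where
  toFun gl := (gl.1 + gl.2, gl.1 - gl.2)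
  invFun w := ((2 : ℝ)⁻¹ • (w.1 + w.2), (2 : ℝ)⁻¹ • (w.1 - w.2))
  left_inv gl := by ext j <;> simp <;> ring
  right_inv w := by ext j <;> simp <;> ring

lemma norm_sumDiff_le {n : Type*} [Fintype n] (gl : (n → ℝ) × (n → ℝ)) :
    ‖sumDiff gl‖ ≤ 2 * ‖gl‖ := by
  have := norm_fst_le gl
  have := norm_snd_le gl
  exact max_le ((norm_add_le gl.1 gl.2).trans (by linarith))
    ((norm_sub_le gl.1 gl.2).trans (by linarith))

variable {n p : ℕ} {X : Matrix (Fin n) (Fin p) ℝ} {y : Fin n → ℝ} {b : Fin p → ℝ}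

lemma signal_sumDiff (gl : (Fin p → ℝ) × (Fin p → ℝ)) :
    signal (sumDiff gl) = had gl.1 gl.2 := by
  funext j
  change ((gl.1 j + gl.2 j) ^ 2 - (gl.1 j - gl.2 j) ^ 2) / 4 = gl.1 j * gl.2 j
  ring

lemma gradVec_sumDiff (hb : Xᵀ *ᵥ (X *ᵥ b) = Xᵀ *ᵥ y) (gl : (Fin p → ℝ) × (Fin p → ℝ)) :
    gradVec X b (sumDiff gl) = Xᵀ *ᵥ (X *ᵥ had gl.1 gl.2 - y) := by
  rw [gradVec, residualVec, signal_sumDiff, mulVec_sub, mulVec_sub, mulVec_sub, hb]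

/-- For `n = 0` both sides vanish; `max n 1` keeps the rescaled step size positive. -/
lemma inv_natCast_smul_transpose_mulVec (X : Matrix (Fin n) (Fin p) ℝ) (z : Fin n → ℝ) :
    (n : ℝ)⁻¹ • Xᵀ *ᵥ z = (max n 1 : ℝ)⁻¹ • Xᵀ *ᵥ z := by
  obtain rfl | hn := n.eq_zero_or_pos
  · rw [Subsingleton.elim z 0, mulVec_zero, smul_zero, smul_zero]
  · rw [max_eq_left (Nat.one_le_cast.2 hn)]

lemma sumDiff_semiconj_gdStep_mulStep (hb : Xᵀ *ᵥ (X *ᵥ b) = Xᵀ *ᵥ y) (η : ℝ) :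
    Function.Semiconj sumDiff (gdStep X y η) (mulStep X b (η / max n 1)) := by
  intro gl
  have gdStep_eq : gdStep X y η gl =
      (gl.1 - η • had gl.2 ((max n 1 : ℝ)⁻¹ • gradVec X b (sumDiff gl)),
        gl.2 - η • had gl.1 ((max n 1 : ℝ)⁻¹ • gradVec X b (sumDiff gl))) := by
    rw [gdStep, inv_natCast_smul_transpose_mulVec, gradVec_sumDiff hb]
  rw [gdStep_eq, mulStep]
  generalize gradVec X b (sumDiff gl) = q
  ext j <;> simp [sumDiff, had] <;> ring

lemma nrm2_sq {k : ℕ} (z : Fin k → ℝ) : nrm2 z ^ 2 = z ⬝ᵥ z := by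
  rw [nrm2, Real.sq_sqrt (by positivity)]
  simp only [dotProduct, pow_two]

lemma lossFun_le_of_residualVec_eq_zero (hb : Xᵀ *ᵥ (X *ᵥ b) = Xᵀ *ᵥ y)
    {gl : (Fin p → ℝ) × (Fin p → ℝ)} (h : residualVec X b (sumDiff gl) = 0)
    (gl' : (Fin p → ℝ) × (Fin p → ℝ)) : lossFun X y gl ≤ lossFun X y gl' := by
  rw [residualVec, signal_sumDiff, mulVec_sub, sub_eq_zero] at h
  unfold lossFun
  gcongr ?_ * ?_
  rw [nrm2_sq, nrm2_sq, h]
  exact mulVec_sub_dotProduct_self_le hb _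

theorem eventually_exists_tendsto_iterate_gdStep (X : Matrix (Fin n) (Fin p) ℝ) (y : Fin n → ℝ)
    (α : ℝ) :
    ∀ᶠ η in 𝓝[>] 0, ∀ gl : (Fin p → ℝ) × (Fin p → ℝ), ‖gl‖ ≤ α →
      (∀ j, gl.1 j + gl.2 j ≠ 0 ∧ gl.1 j - gl.2 j ≠ 0) →
      ∃ glim, Tendsto (fun t => (gdStep X y η)^[t] gl) atTop (𝓝 glim) ∧
        ∀ gl', lossFun X y glim ≤ lossFun X y gl' := by
  obtain ⟨b, hb⟩ := exists_transpose_mulVec_mulVec_eq X y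
  have tendsto_rescale : Tendsto (fun η : ℝ => η / max n 1) (𝓝[>] 0) (𝓝[>] 0) := by
    refine tendsto_nhdsWithin_iff.2 ⟨?_, ?_⟩
    · simpa using (tendsto_id.div_const (max n 1 : ℝ)).mono_left (nhdsWithin_le_nhds (a := (0 : ℝ)))
    · filter_upwards [self_mem_nhdsWithin] with η hη
      exact div_pos (Set.mem_Ioi.1 hη) (by positivity)
  filter_upwards [tendsto_rescale.eventually
    (eventually_exists_tendsto_iterate_mulStep X b (2 * α))] with η hη gl hgl hne
  obtain ⟨w', hw', hres⟩ :=
    hη (sumDiff gl) ((norm_sumDiff_le gl).trans (by gcongr)) hne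
  refine ⟨sumDiff.symm w', ?_, lossFun_le_of_residualVec_eq_zero hb ?_⟩
  · refine ((sumDiff.symm.continuous.tendsto w').comp hw').congr fun t => ?_
    rw [Function.comp_apply, ← (sumDiff_semiconj_gdStep_mulStep hb η).iterate_right t gl,
      sumDiff.symm_apply_apply]
  · rwa [sumDiff.apply_symm_apply]

end GradientDescent

section RandomInitialization

lemma ae_prod_pi_ne {Ω ι : Type*} [MeasurableSpace Ω] [Fintype ι] (μ : Measure Ω)
    (ν : ι → Measure ℝ) [∀ i, SigmaFinite (ν i)] (j : ι) [NullSingletonClass (ν j)] {f : Ω → ℝ}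
    (hf : Measurable f) : ∀ᵐ q ∂μ.prod (Measure.pi ν), q.2 j ≠ f q.1 := by
  have measurable_eq : MeasurableSet {q : Ω × (ι → ℝ) | q.2 j = f q.1} :=
    measurableSet_eq_fun (by fun_prop) (by fun_prop)
  simp only [ae_iff, ne_eq, not_not]
  exact (Measure.measure_prod_null measurable_eq).2
    (.of_forall fun ω => Measure.pi_hyperplane ν j (f ω))

instance nullSingletonClass_unifMeasure (α : ℝ) : NullSingletonClass (unifMeasure α) :=
  ⟨fun x => by rw [unifMeasure, Measure.smul_apply, measure_singleton, smul_zero]⟩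

lemma isProbabilityMeasure_unifMeasure {α : ℝ} (hα : 0 < α) :
    IsProbabilityMeasure (unifMeasure α) := by
  refine ⟨?_⟩
  rw [unifMeasure, Measure.smul_apply, Measure.restrict_apply_univ, Real.volume_Ioo,
    sub_neg_eq_add, ← two_mul, smul_eq_mul]
  exact ENNReal.inv_mul_cancel (by simpa using hα) ENNReal.ofReal_ne_top

lemma isProbabilityMeasure_initMeasure (p : ℕ) {α : ℝ} (hα : 0 < α) :
    IsProbabilityMeasure (initMeasure p α) := by
  have := isProbabilityMeasure_unifMeasure hα
  unfold initMeasure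
  infer_instance

lemma ae_abs_le_unifMeasure (α : ℝ) : ∀ᵐ x ∂unifMeasure α, |x| ≤ α := by
  refine Measure.ae_smul_measure ?_ _
  filter_upwards [ae_restrict_mem measurableSet_Ioo] with x hx
  exact abs_le.2 ⟨hx.1.le, hx.2.le⟩

lemma ae_norm_le_initMeasure (p : ℕ) {α : ℝ} (hα : 0 < α) :
    ∀ᵐ gl ∂initMeasure p α, ‖gl‖ ≤ α := by
  have := isProbabilityMeasure_unifMeasure hα
  have ae_norm_le : ∀ᵐ g ∂Measure.pi fun _ : Fin p => unifMeasure α, ‖g‖ ≤ α := by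
    filter_upwards [ae_all_iff.2 fun j =>
      (Measure.quasiMeasurePreserving_eval (fun _ => unifMeasure α) j).ae
        (ae_abs_le_unifMeasure α)] with g hg
    exact (pi_norm_le_iff_of_nonneg hα.le).2 hg
  filter_upwards [Measure.quasiMeasurePreserving_fst.ae ae_norm_le,
    Measure.quasiMeasurePreserving_snd.ae ae_norm_le] with gl hg hl
  exact max_le hg hl

lemma ae_add_ne_zero_and_sub_ne_zero_initMeasure (p : ℕ) {α : ℝ} (hα : 0 < α) :
    ∀ᵐ gl ∂initMeasure p α, ∀ j, gl.1 j + gl.2 j ≠ 0 ∧ gl.1 j - gl.2 j ≠ 0 := by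
  have := isProbabilityMeasure_unifMeasure hα
  refine ae_all_iff.2 fun j => ?_
  filter_upwards [ae_prod_pi_ne _ _ j (measurable_pi_apply j).neg,
    ae_prod_pi_ne _ _ j (measurable_pi_apply j)] with gl hneg heq
  exact ⟨fun h => hneg (eq_neg_of_add_eq_zero_right h), fun h => heq (sub_eq_zero.1 h).symm⟩

end RandomInitialization

/-- For sufficiently small step sizes, gradient descent on `f(g,l)` with i.i.d.
`Unif(−α, α)` initialization converges almost surely to a global minimum of `f`. -/
theorem stmt2 (n p : ℕ) (X : Matrix (Fin n) (Fin p) ℝ) (y : Fin n → ℝ)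
    (α : ℝ) (hα : 0 < α) :
    ∃ η₀ : ℝ, 0 < η₀ ∧ ∀ η : ℝ, 0 < η → η < η₀ →
      initMeasure p α
          {gl0 | ∃ glim : (Fin p → ℝ) × (Fin p → ℝ),
            Filter.Tendsto (fun t => (gdStep X y η)^[t] gl0) Filter.atTop (nhds glim) ∧
            ∀ b, lossFun X y glim ≤ lossFun X y b} = 1 := by
  obtain ⟨η₀, hη₀, hconv⟩ := mem_nhdsGT_iff_exists_Ioo_subset.1
    (eventually_exists_tendsto_iterate_gdStep X y α)
  refine ⟨η₀, hη₀, fun η hη hηη₀ => ?_⟩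
  have := isProbabilityMeasure_initMeasure p hα
  refine (measure_congr (eventuallyEq_univ.2 ?_)).trans measure_univ
  filter_upwards [ae_norm_le_initMeasure p hα, ae_add_ne_zero_and_sub_ne_zero_initMeasure p hα]
    with gl hnorm hne
  exact hconv ⟨hη, hηη₀⟩ gl hnorm hne
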